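/- arXiv:2108.03617 — 2 statements merged into one kernel-verified Lean document; each statement's English description precedes it below -/
import Mathlib

section
/- Let A be a (not necessarily commutative) semiring and N : A → A a multiplicative negation map (an additive monoid homomorphism with N ∘ N = id and N(ab) = N(a)b = aN(b)). Define [a, b] := ab + N(ba). Then for all x, y, z ∈ A the ⪯-Jacobi identity holds in the form [[x, y], z] + [y, [x, z]] = [x, [y, z]] + q + N(q), where q = yxz + zxy; in particular [x, [y, z]] ⪯₀ [[x, y], z] + [y, [x, z]]. -/
/-!
The bracket `[x, ·]` satisfies the Leibniz rule up to a quasi-zero: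
`[x, y] z + y [x, z] = [x, y z] + (y x z + N (y x z))`. Adding to this the image under `N` of the
same rule for `z y`, and using that `[x, ·]` is additive and commutes with `N`, gives the Jacobi
identity up to the quasi-zeros of `y x z` and of `N (z x y)`; when `N` is an involution, the latter
is also the quasi-zero of `z x y`.
-/

/-- The Lie commutator `[a, b] := a b + N (b a)` in a semiring with a
multiplicative negation map `N`. -/
def lieComm {A : Type*} [Semiring A] (N : A →+ A) (a b : A) : A := a * b + N (b * a)

section NonAssoc

variable {A : Type*} [NonUnitalNonAssocSemiring A] (N : CentroidHom A)

/-- The commutator `[a, b] = a b + N (b a)` of `lieComm`, for a possibly non-unital `A`. The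
conditions `N (a b) = N a * b = a * N b` on an additive map `N` say that it lies in the centroid. -/
def negCommutator (a b : A) : A := a * b + N (b * a)

/-- The quasi-zero `c + N c` of an element `c`, as a map in the centroid. -/
def quasiZero : CentroidHom A := 1 + N

theorem quasiZero_apply (c : A) : quasiZero N c = c + N c := rfl

theorem map_quasiZero (c : A) : N (quasiZero N c) = quasiZero N (N c) := by
  simp only [quasiZero_apply, map_add]

theorem quasiZero_map_of_involutive (hN : Function.Involutive N) (c : A) :
    quasiZero N (N c) = quasiZero N c := by
  rw [quasiZero_apply, quasiZero_apply, hN c, add_comm]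

theorem negCommutator_add_right (x a b : A) :
    negCommutator N x (a + b) = negCommutator N x a + negCommutator N x b := by
  simp only [negCommutator, mul_add, add_mul, map_add]
  exact add_add_add_comm _ _ _ _

theorem negCommutator_map_right (x a : A) :
    negCommutator N x (N a) = N (negCommutator N x a) := by
  simp only [negCommutator, map_add, map_mul_left N x a, map_mul_right N a x]

end NonAssoc

section Assoc

variable {A : Type*} [NonUnitalSemiring A] (N : CentroidHom A)

theorem negCommutator_leibniz (x y z : A) :
    negCommutator N x y * z + y * negCommutator N x z =
      negCommutator N x (y * z) + quasiZero N (y * x * z) := by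
  simp only [negCommutator, quasiZero_apply, add_mul, mul_add, ← map_mul_left,
    ← map_mul_right, mul_assoc]
  abel

theorem jacobi_surpassing_general (x y z : A) :
    negCommutator N (negCommutator N x y) z + negCommutator N y (negCommutator N x z) =
      negCommutator N x (negCommutator N y z) + quasiZero N (y * x * z + N (z * x * y)) :=
  calc
    _ = (negCommutator N x y * z + y * negCommutator N x z) +
          N (negCommutator N x z * y + z * negCommutator N x y) := by
      rw [negCommutator, negCommutator.eq_def N y, map_add]
      abel
    _ = (negCommutator N x (y * z) + quasiZero N (y * x * z)) +
          N (negCommutator N x (z * y) + quasiZero N (z * x * y)) := by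
      rw [negCommutator_leibniz, negCommutator_leibniz]
    _ = (negCommutator N x (y * z) + negCommutator N x (N (z * y))) +
          (quasiZero N (y * x * z) + quasiZero N (N (z * x * y))) := by
      rw [map_add, ← negCommutator_map_right, map_quasiZero, add_add_add_comm]
    _ = _ := by
      rw [← negCommutator_add_right, ← map_add (quasiZero N), ← negCommutator]

end Assoc

/-- Let `A` be a semiring and `N` a multiplicative negation map
(`N ∘ N = id`, `N (a b) = N a * b = a * N b`).  With `[a,b] := a b + N (b a)`,
the `⪯`-Jacobi identity holds: for all `x, y, z`,
`[[x,y],z] + [y,[x,z]] = [x,[y,z]] + q + N q` with `q = y x z + z x y`;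
in particular `[x,[y,z]] ⪯₀ [[x,y],z] + [y,[x,z]]`. -/
theorem jacobi_surpassing (A : Type*) [Semiring A]
    (N : A →+ A) (hN2 : ∀ a, N (N a) = a)
    (hNl : ∀ a b : A, N (a * b) = N a * b) (hNr : ∀ a b : A, N (a * b) = a * N b) :
    ∀ x y z : A,
      lieComm N (lieComm N x y) z + lieComm N y (lieComm N x z) =
        lieComm N x (lieComm N y z) +
          ((y * x * z + z * x * y) + N (y * x * z + z * x * y)) ∧
      ∃ c : A,
        lieComm N (lieComm N x y) z + lieComm N y (lieComm N x z) =
          lieComm N x (lieComm N y z) + (c + N c) := by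
  intro x y z
  let M : CentroidHom A := { N with map_mul_left' := hNr, map_mul_right' := hNl }
  have jacobi := jacobi_surpassing_general M x y z
  rw [map_add, quasiZero_map_of_involutive M hN2, ← map_add] at jacobi
  exact ⟨jacobi, _, jacobi⟩
end

section
/- Let A be a commutative semiring, ⋀ the exterior semialgebra over A, V ⊂ ⋀ the A-span of {x^i : i ∈ ℕ}, and f : V → V an A-linear map. Let D_f(z) and D̄_f(z) be the multiplicative families of A-linear operators on ⋀ commuting with (−), determined by D_f(z)x^j = Σ_{n≥0} f^n(x^j) z^n, D̄_f(z)x^j = x^j + ((−)f(x^j))·z, D_f(z)1 = D̄_f(z)1 = 1, and D(z)(v_1 ∧ ⋯ ∧ v_r) = D(z)v_1 ∧ ⋯ ∧ D(z)v_r. Then D_f(z) and D̄_f(z) are quasi-inverse: for every u ∈ ⋀, both D̄_f(z)(D_f(z)u) and D_f(z)(D̄_f(z)u) have constant coefficient (coefficient of z^0) equal to u, and for every k ≥ 1 their coefficient of z^k is a quasi-zero; i.e. D̄_f(z)(D_f(z)u) ⪰ u and D_f(z)(D̄_f(z)u) ⪰ u. -/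
/-!  The exterior semialgebra over a commutative semiring `A`, following
Chapman–Gatto–Rowen.  It is the free `A`-module on the basis consisting of a
unit symbol `1` (here `none`) together with all pairs `(ε, s)` where
`ε ∈ {+1, −1}` (here a `Bool`, `true = +1`) and `s` is a strictly decreasing
nonempty tuple of natural numbers (here a nonempty `Finset ℕ`, read in
decreasing order).  -/

namespace ExtSemi

/-- The basis: `none` is the unit `1`; `some (ε, s)` is the sign `ε` times the
strictly decreasing wedge monomial on the nonempty finite set `s`. -/
abbrev XB : Type := Option (Bool × {s : Finset ℕ // s.Nonempty})

variable (A : Type*) [CommSemiring A]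

/-- The exterior semialgebra `⋀`: the free `A`-module on `XB`. -/
abbrev Ext : Type _ := XB →₀ A

/-- Sign flip on the basis; the unit is fixed. -/
def negB : XB → XB
  | none => none
  | some (ε, s) => some (!ε, s)

/-- The negation map `(−)` on `⋀`: the `A`-linear map sending `(ε, s)` to
`(−ε, s)` and fixing `1`. -/
noncomputable def neg : Ext A →ₗ[A] Ext A := Finsupp.lmapDomain A A negB

/-- The signed basis element attached to a sign and a finite set; the empty set
gives the unit (on which the negation acts trivially). -/
noncomputable def bElem (ε : Bool) (t : Finset ℕ) : Ext A :=
  if h : t.Nonempty then Finsupp.single (some (ε, ⟨t, h⟩)) 1 else Finsupp.single none 1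

/-- The unit `1` of `⋀`. -/
noncomputable def one : Ext A := Finsupp.single (none : XB) 1

/-- The generator `x^i`. -/
noncomputable def xg (i : ℕ) : Ext A := bElem A true {i}

/-- `true` iff merging the decreasing enumerations of the disjoint sets `s`, `t`
(concatenated as `s ++ t`) into a single decreasing enumeration is an even
permutation, i.e. iff the number of pairs `(a ∈ s, b ∈ t)` with `a < b` is even. -/
def mergeEven (s t : Finset ℕ) : Bool :=
  decide ((∑ a ∈ s, (t.filter (fun b => a < b)).card) % 2 = 0)

/-- Wedge product of two basis elements: concatenate the tuples and multiply the
signs (`0` if the tuples share an entry). -/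
noncomputable def wB : XB → XB → Ext A
  | none, c => Finsupp.single c 1
  | some b, none => Finsupp.single (some b) 1
  | some (ε, s), some (δ, t) =>
      if s.1 ∩ t.1 = ∅ then bElem A ((ε == δ) == mergeEven s.1 t.1) (s.1 ∪ t.1) else 0

/-- The wedge product on `⋀`, extended `A`-bilinearly from the basis. -/
noncomputable def wedge (u v : Ext A) : Ext A :=
  u.sum fun b a => v.sum fun c a' => (a * a') • wB A b c

/-- Extend a map defined on the basis `A`-linearly to all of `⋀`. -/
noncomputable def ext1 (g : XB → Ext A) (u : Ext A) : Ext A := u.sum fun b a => a • g b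

/-- Quasi-zeros: elements of the form `w + (−)w`. -/
def IsQuasiZero (q : Ext A) : Prop := ∃ w : Ext A, q = w + neg A w

/-- The surpassing relation: `u ⪯ v` iff `v = u + q` for some quasi-zero `q`. -/
def Prec (u v : Ext A) : Prop := ∃ q : Ext A, IsQuasiZero A q ∧ v = u + q

/-- Twist an element by a sign. -/
noncomputable def twist (ε : Bool) (u : Ext A) : Ext A := if ε then u else neg A u

/-- `k`-fold application of the negation map. -/
noncomputable def negpow (k : ℕ) (u : Ext A) : Ext A := if k % 2 = 0 then u else neg A u

/-- Wedge product of a list of elements of `⋀`. -/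
noncomputable def wedgeL (l : List (Ext A)) : Ext A := l.foldr (wedge A) (one A)

/-- The wedge monomial `x^{j_1} ∧ ⋯ ∧ x^{j_r}` for an arbitrary tuple. -/
noncomputable def wedgeMon (l : List ℕ) : Ext A := wedgeL A (l.map (xg A))

/-- The decreasing enumeration of a finite set of naturals. -/
def descList (s : Finset ℕ) : List ℕ := (s.sort (· ≤ ·)).reverse

/-- The contraction `∂^j ⌟` on basis elements:
`∂^j ⌟ (x^{i_1} ∧ ⋯ ∧ x^{i_r}) = Σ_k (−)^{k−1}[i_k = j]·x^{i_1} ∧ ⋯ ∧ x^{i_{k-1}} ∧ x^{i_{k+1}} ∧ ⋯ ∧ x^{i_r}`,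
`∂^j ⌟ 1 = 0`; it commutes with the negation map. -/
noncomputable def contraB (j : ℕ) : XB → Ext A
  | none => 0
  | some (ε, s) =>
      if j ∈ s.1 then
        twist A ε (negpow A ((s.1.filter (fun b => j < b)).card) (bElem A true (s.1.erase j)))
      else 0

/-- The contraction `∂^j ⌟` on `⋀`, extended `A`-linearly. -/
noncomputable def contra (j : ℕ) (u : Ext A) : Ext A := ext1 A (contraB A j) u

/-- Make an `A`-linear operator on `⋀` commuting with the negation map out of a
coefficient family on decreasing lists (`F k l` = the `k`-th coefficient on the
monomial with decreasing tuple `l`); the unit is sent to itself in degree `0`. -/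
noncomputable def hsOn (F : ℕ → List ℕ → Ext A) (k : ℕ) : XB → Ext A
  | none => if k = 0 then one A else 0
  | some (ε, s) => twist A ε (F k (descList s.1))

open Finset.Nat in
/-- Coefficient of `z^k` in `σ₊(z)` on a monomial:
`σ_k (x^{i_1} ∧ ⋯ ∧ x^{i_r}) = Σ_{k_1+⋯+k_r=k} x^{i_1+k_1} ∧ ⋯ ∧ x^{i_r+k_r}`. -/
noncomputable def sigPlusL (k : ℕ) (l : List ℕ) : Ext A :=
  ∑ c ∈ antidiagonalTuple l.length k,
    wedgeMon A (List.ofFn fun i : Fin l.length => l.get i + c i)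

/-- Coefficient of `z^k` in the Schubert derivation `σ₊(z)`. -/
noncomputable def sigPlus (k : ℕ) : Ext A → Ext A := ext1 A (hsOn A (sigPlusL A) k)

open Finset.Nat in
/-- Coefficient of `w^{−k}` in `σ₋(w)`, where `σ₋(w) x^j = Σ_{k=0}^{j} x^{j−k} w^{−k}`. -/
noncomputable def sigMinusL (k : ℕ) (l : List ℕ) : Ext A :=
  ∑ c ∈ antidiagonalTuple l.length k,
    if ∀ i, c i ≤ l.get i then
      wedgeMon A (List.ofFn fun i : Fin l.length => l.get i - c i)
    else 0

/-- Coefficient of `w^{−k}` in the Schubert derivation `σ₋(w)`. -/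
noncomputable def sigMinus (k : ℕ) : Ext A → Ext A := ext1 A (hsOn A (sigMinusL A) k)

open Finset.Nat in
/-- Coefficient of `z^{−k}` in `σ̄₋(z)`, where `σ̄₋(z) x^j = x^j + ((−)x^{j−1}) z^{−1}`
(`x^{−1} := 0`). -/
noncomputable def sbarMinusL (k : ℕ) (l : List ℕ) : Ext A :=
  negpow A k (∑ c ∈ antidiagonalTuple l.length k,
    if ∀ i, c i ≤ 1 ∧ c i ≤ l.get i then
      wedgeMon A (List.ofFn fun i : Fin l.length => l.get i - c i)
    else 0)

/-- Coefficient of `z^{−k}` in the Schubert derivation `σ̄₋(z)`. -/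
noncomputable def sbarMinus (k : ℕ) : Ext A → Ext A := ext1 A (hsOn A (sbarMinusL A) k)

open Finset.Nat in
/-- Coefficient of `w^k` in `σ̄₊(w)`, where `σ̄₊(w) x^j = x^j + ((−)x^{j+1}) w`. -/
noncomputable def sbarPlusL (k : ℕ) (l : List ℕ) : Ext A :=
  negpow A k (∑ c ∈ antidiagonalTuple l.length k,
    if ∀ i, c i ≤ 1 then
      wedgeMon A (List.ofFn fun i : Fin l.length => l.get i + c i)
    else 0)

/-- Coefficient of `w^k` in the Schubert derivation `σ̄₊(w)`. -/
noncomputable def sbarPlus (k : ℕ) : Ext A → Ext A := ext1 A (hsOn A (sbarPlusL A) k)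

/-- The basis element `[x]^r_λ = x^{r−1+λ_1} ∧ x^{r−2+λ_2} ∧ ⋯ ∧ x^{λ_r}`
attached to a partition `λ` with at most `r` parts. -/
noncomputable def xlam (r : ℕ) (lam : Fin r → ℕ) : Ext A :=
  wedgeMon A (List.ofFn fun i : Fin r => (r - 1 - (i : ℕ)) + lam i)

end ExtSemi

namespace ExtSemi

variable (A : Type*) [CommSemiring A]

/-- Embed the free module `V = ⊕ A x^i` (represented as `ℕ →₀ A`) into `⋀`. -/
noncomputable def vIn (v : ℕ →₀ A) : Ext A := v.sum fun i a => a • xg A i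

open Finset.Nat in
/-- Coefficient of `z^n` in the HS-derivation `D_f(z)` on a decreasing tuple,
where `D_f(z) x^j = Σ_{n≥0} f^n(x^j) z^n` and `D_f(z)` is multiplicative. -/
noncomputable def DfL (f : Module.End A (ℕ →₀ A)) (n : ℕ) (l : List ℕ) : Ext A :=
  ∑ c ∈ antidiagonalTuple l.length n,
    wedgeL A (List.ofFn fun i : Fin l.length =>
      vIn A ((f ^ (c i)) (Finsupp.single (l.get i) 1)))

/-- Coefficient of `z^n` in the HS-derivation `D_f(z)`. -/
noncomputable def Df (f : Module.End A (ℕ →₀ A)) (n : ℕ) : Ext A → Ext A :=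
  ext1 A (hsOn A (DfL A f) n)

open Finset.Nat in
/-- Coefficient of `z^n` in the HS-derivation `D̄_f(z)` on a decreasing tuple,
where `D̄_f(z) x^j = x^j + ((−)f(x^j))·z` and `D̄_f(z)` is multiplicative. -/
noncomputable def DbarL (f : Module.End A (ℕ →₀ A)) (n : ℕ) (l : List ℕ) : Ext A :=
  ∑ c ∈ antidiagonalTuple l.length n,
    if ∀ i, c i ≤ 1 then
      wedgeL A (List.ofFn fun i : Fin l.length =>
        if c i = 0 then xg A (l.get i)
        else neg A (vIn A (f (Finsupp.single (l.get i) 1))))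
    else 0

/-- Coefficient of `z^n` in the HS-derivation `D̄_f(z)`. -/
noncomputable def Dbar (f : Module.End A (ℕ →₀ A)) (n : ℕ) : Ext A → Ext A :=
  ext1 A (hsOn A (DbarL A f) n)

/-!
Extending a power series `h` of endomorphisms of `V` to a multiplicative family `D_h(z)` should be
functorial, `D_{hh'}(z) = D_h(z) D_{h'}(z)`, and `D_f(z)`, `D̄_f(z)` belong to the mutually inverse
series `(1 - fz)⁻¹` and `1 - fz`.  Over a semiring functoriality fails on the nose: `D_h(z)` is
multiplicative only on basis elements, since `x ∧ x = 0` whereas `D_h(z)x ∧ D_h(z)x` is merely a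
quasi-zero.

Over a commutative ring, `⋀` maps multiplicatively to the exterior algebra of `V`, where `D_h(z)`
becomes the algebra homomorphism induced by `h` and functoriality holds.  The kernel of this map
consists of elements without unit component that are fixed by the negation map, and these are
quasi-zeros.  For a semiring, `f` and `u` lift to a polynomial semiring over `ℕ`, where the
conclusion can be checked after extending scalars to polynomials over `ℤ`.
-/

section PowerSeriesOperators

open scoped PowerSeries

theorem one_sub_C_mul_X_mul_mk_pow {R : Type*} [Ring R] (a : R) :
    (1 - PowerSeries.C a * PowerSeries.X) * PowerSeries.mk (a ^ ·) = 1 := by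
  ext (_ | n) <;> simp [sub_mul, mul_assoc, PowerSeries.coeff_succ_X_mul, pow_succ',
    PowerSeries.coeff_one]

theorem mk_pow_mul_one_sub_C_mul_X {R : Type*} [Ring R] (a : R) :
    PowerSeries.mk (a ^ ·) * (1 - PowerSeries.C a * PowerSeries.X) = 1 := by
  ext (_ | n) <;> simp [mul_sub, ← mul_assoc, PowerSeries.coeff_succ_mul_X, pow_succ,
    PowerSeries.coeff_one]

variable {R S M N F : Type*} [Semiring R] [Semiring S] [AddCommMonoid M] [AddCommMonoid N]
  [Module R M] [Module S N] [FunLike F M N]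

/-- The map `θ` carries the series of operators `P` on its source to the series `Q` on its target,
coefficient by coefficient.  The scalars may differ, so as to cover changes of base. -/
def Intertwines (θ : F) (P : (Module.End R M)⟦X⟧) (Q : (Module.End S N)⟦X⟧) : Prop :=
  ∀ n u, θ (PowerSeries.coeff n P u) = PowerSeries.coeff n Q (θ u)

theorem Intertwines.mul [AddMonoidHomClass F M N] {θ : F} {P P' : (Module.End R M)⟦X⟧}
    {Q Q' : (Module.End S N)⟦X⟧} (h : Intertwines θ P Q) (h' : Intertwines θ P' Q') :
    Intertwines θ (P * P') (Q * Q') := fun n u => by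
  simp only [PowerSeries.coeff_mul, LinearMap.sum_apply, Module.End.mul_apply, map_sum, h _ _,
    h' _ _]

end PowerSeriesOperators

section HasseSchmidt

open ExteriorAlgebra (ι)
open Finset.HasAntidiagonal (antidiagonal mem_antidiagonal)
open scoped PowerSeries

variable {R M : Type*} [CommRing R] [AddCommGroup M] [Module R M]

/-- The generating series `Σ ι(hₙ v) zⁿ` of the orbit of `v` under the coefficients of `h`. -/
noncomputable def ιSeries (h : (Module.End R M)⟦X⟧) : M →ₗ[R] (ExteriorAlgebra R M)⟦X⟧ where
  toFun v := PowerSeries.mk fun n => ι R (PowerSeries.coeff n h v)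
  map_add' u v := by ext n; simp
  map_smul' a v := by ext n; simp

theorem ιSeries_mul_self (h : (Module.End R M)⟦X⟧) (v : M) : ιSeries h v * ιSeries h v = 0 := by
  ext n
  simp only [ιSeries, LinearMap.coe_mk, AddHom.coe_mk, PowerSeries.coeff_mul,
    PowerSeries.coeff_mk, map_zero]
  refine Finset.sum_involution (fun p _ => p.swap) (fun p _ => ExteriorAlgebra.ι_add_mul_swap _ _)
    ?_ (fun p hp => by simpa [add_comm] using hp) (fun p _ => p.swap_swap)
  rintro ⟨i, j⟩ - hne heq
  obtain rfl : j = i := congrArg Prod.fst heq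
  exact hne (ExteriorAlgebra.ι_sq_zero _)

/-- The Hasse–Schmidt derivation of the exterior algebra determined by the power series `h` of
endomorphisms of `M`: the coefficients of the algebra homomorphism `⋀ M → (⋀ M)⟦z⟧` extending
`v ↦ Σ hₙ(v) zⁿ`. -/
noncomputable def hasseSchmidt (h : (Module.End R M)⟦X⟧) :
    (Module.End R (ExteriorAlgebra R M))⟦X⟧ :=
  PowerSeries.mk fun n => (PowerSeries.coeff n).restrictScalars R ∘ₗ
    (ExteriorAlgebra.lift R ⟨ιSeries h, ιSeries_mul_self h⟩).toLinearMap

theorem coeff_hasseSchmidt_one (h : (Module.End R M)⟦X⟧) (n : ℕ) :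
    PowerSeries.coeff n (hasseSchmidt h) 1 = if n = 0 then 1 else 0 := by
  simp [hasseSchmidt, PowerSeries.coeff_one]

theorem coeff_hasseSchmidt_ι_mul (h : (Module.End R M)⟦X⟧) (n : ℕ) (v : M)
    (x : ExteriorAlgebra R M) :
    PowerSeries.coeff n (hasseSchmidt h) (ι R v * x) = ∑ p ∈ antidiagonal n,
      ι R (PowerSeries.coeff p.1 h v) * PowerSeries.coeff p.2 (hasseSchmidt h) x := by
  simp [hasseSchmidt, ιSeries, PowerSeries.coeff_mul]

/-- Left multiplication by vectors, the creation operators of the exterior algebra. -/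
noncomputable def leftMul : M →ₗ[R] Module.End R (ExteriorAlgebra R M) :=
  LinearMap.mul R (ExteriorAlgebra R M) ∘ₗ ι R

/-- The generating series `Σ (hₙ v ∧ ·) zⁿ` of operators on the exterior algebra. -/
noncomputable def leftMulSeries (h : (Module.End R M)⟦X⟧) (v : M) :
    (Module.End R (ExteriorAlgebra R M))⟦X⟧ :=
  PowerSeries.mk fun n => leftMul (PowerSeries.coeff n h v)

theorem hasseSchmidt_mul_C_leftMul (h : (Module.End R M)⟦X⟧) (v : M) :
    hasseSchmidt h * PowerSeries.C (leftMul v) = leftMulSeries h v * hasseSchmidt h := by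
  ext n : 1
  rw [PowerSeries.coeff_mul_C, PowerSeries.coeff_mul]
  refine LinearMap.ext fun x => ?_
  simp [leftMulSeries, leftMul, coeff_hasseSchmidt_ι_mul]

theorem eq_hasseSchmidt {h : (Module.End R M)⟦X⟧} {P : (Module.End R (ExteriorAlgebra R M))⟦X⟧}
    (hone : ∀ n, PowerSeries.coeff n P 1 = if n = 0 then 1 else 0)
    (hmul : ∀ v, P * PowerSeries.C (leftMul v) = leftMulSeries h v * P) :
    P = hasseSchmidt h := by
  ext n : 1
  refine LinearMap.ext fun x => ?_
  induction x using CliffordAlgebra.left_induction generalizing n with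
  | algebraMap r =>
    simp only [Algebra.algebraMap_eq_smul_one, map_smul]
    exact congrArg (r • ·) ((hone n).trans (coeff_hasseSchmidt_one h n).symm)
  | add x y hx hy => rw [map_add, map_add, hx, hy]
  | ι_mul x v hx =>
    have hPn := LinearMap.congr_fun (congrArg (PowerSeries.coeff n) (hmul v)) x
    rw [PowerSeries.coeff_mul_C, PowerSeries.coeff_mul, LinearMap.sum_apply] at hPn
    refine hPn.trans (Eq.trans ?_ (coeff_hasseSchmidt_ι_mul h n v x).symm)
    refine Finset.sum_congr rfl fun p _ => ?_
    rw [← hx p.2, leftMulSeries, PowerSeries.coeff_mk, Module.End.mul_apply]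
    rfl

theorem hasseSchmidt_mul_leftMulSeries (h h' : (Module.End R M)⟦X⟧) (v : M) :
    hasseSchmidt h * leftMulSeries h' v = leftMulSeries (h * h') v * hasseSchmidt h := by
  have hcomm (i : ℕ) (w : M) : PowerSeries.coeff i (hasseSchmidt h) * leftMul w =
      ∑ p ∈ antidiagonal i,
        leftMul (PowerSeries.coeff p.1 h w) * PowerSeries.coeff p.2 (hasseSchmidt h) := by
    rw [← PowerSeries.coeff_mul_C, hasseSchmidt_mul_C_leftMul, PowerSeries.coeff_mul]
    simp only [leftMulSeries, PowerSeries.coeff_mk]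
  ext n : 1
  simp only [leftMulSeries, PowerSeries.coeff_mul, PowerSeries.coeff_mk, hcomm,
    LinearMap.sum_apply, Module.End.mul_apply, map_sum, Finset.sum_mul, Finset.sum_sigma']
  refine Finset.sum_nbij' (fun ⟨⟨_, j⟩, ⟨a, b⟩⟩ => ⟨(a + j, b), (a, j)⟩)
    (fun ⟨⟨_, b⟩, ⟨a, j⟩⟩ => ⟨(a + b, j), (a, b)⟩) ?_ ?_ ?_ ?_ ?_ <;>
    simp only [Finset.mem_sigma, mem_antidiagonal] <;> grind

theorem hasseSchmidt_mul (h h' : (Module.End R M)⟦X⟧) :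
    hasseSchmidt (h * h') = hasseSchmidt h * hasseSchmidt h' := by
  refine (eq_hasseSchmidt (fun n => ?_) fun v => ?_).symm
  · rw [PowerSeries.coeff_mul, LinearMap.sum_apply]
    rcases n with _ | n
    · rw [Finset.Nat.antidiagonal_zero, Finset.sum_singleton, Module.End.mul_apply,
        coeff_hasseSchmidt_one, if_pos rfl, coeff_hasseSchmidt_one, if_pos rfl]
    · refine (Finset.sum_eq_zero fun p hp => ?_).trans (if_neg n.succ_ne_zero).symm
      have : p.1 + p.2 = n + 1 := mem_antidiagonal.1 hp
      simp only [Module.End.mul_apply, coeff_hasseSchmidt_one, apply_ite, map_zero]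
      grind
  · rw [mul_assoc, hasseSchmidt_mul_C_leftMul, ← mul_assoc, hasseSchmidt_mul_leftMulSeries,
      mul_assoc]

theorem hasseSchmidt_one : hasseSchmidt (1 : (Module.End R M)⟦X⟧) = 1 := by
  refine (eq_hasseSchmidt (fun n => ?_) fun v => ?_).symm
  · rw [PowerSeries.coeff_one]; split_ifs <;> rfl
  · ext n : 1
    simp only [leftMulSeries, mul_one, one_mul, PowerSeries.coeff_C, PowerSeries.coeff_mk,
      PowerSeries.coeff_one]
    split_ifs <;> simp

end HasseSchmidt

section ListsAndTuples

open Finset.HasAntidiagonal (antidiagonal mem_antidiagonal)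
open Finset.Nat (antidiagonalTuple mem_antidiagonalTuple)

theorem sum_antidiagonalTuple_succ {M : Type*} [AddCommMonoid M] (k n : ℕ)
    (g : (Fin (k + 1) → ℕ) → M) :
    ∑ c ∈ antidiagonalTuple (k + 1) n, g c =
      ∑ p ∈ antidiagonal n, ∑ c ∈ antidiagonalTuple k p.2, g (Fin.cons p.1 c) := by
  rw [Finset.sum_sigma']
  refine Finset.sum_bij' (fun c _ => ⟨(c 0, ∑ i, Fin.tail c i), Fin.tail c⟩)
    (fun q _ => Fin.cons q.1.1 q.2) ?_ ?_ ?_ ?_ ?_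
  · intro c hc
    rw [mem_antidiagonalTuple, Fin.sum_univ_succ] at hc
    simp [mem_antidiagonalTuple, Fin.tail, hc]
  · rintro ⟨⟨a, b⟩, c⟩ hc
    simp only [Finset.mem_sigma, mem_antidiagonal, mem_antidiagonalTuple] at hc
    simp [mem_antidiagonalTuple, Fin.sum_univ_succ, hc.1, hc.2]
  · simp
  · rintro ⟨⟨a, b⟩, c⟩ hc
    obtain ⟨-, rfl⟩ : a + b = n ∧ ∑ i, c i = b := by
      simpa [mem_antidiagonalTuple] using hc
    simp
  · simp

theorem descList_eq_sort (s : Finset ℕ) : descList s = s.sort (· ≥ ·) := by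
  refine List.Perm.eq_of_pairwise' (r := (· ≥ ·)) ?_ (Finset.pairwise_sort _ _) ?_
  · exact List.pairwise_reverse.2 (Finset.pairwise_sort s (· ≤ ·))
  · exact (List.reverse_perm _).trans
      ((Finset.sort_perm_toList s _).trans (Finset.sort_perm_toList s _).symm)

theorem descList_insert {a : ℕ} {t : Finset ℕ} (h : ∀ b ∈ t, b < a) :
    descList (insert a t) = a :: descList t := by
  rw [descList_eq_sort, descList_eq_sort]
  exact Finset.sort_insert _ (fun b hb => (h b hb).le) fun ha => lt_irrefl _ (h a ha)

@[simp]
theorem descList_empty : descList ∅ = [] := by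
  simp [descList]

theorem descList_ne_nil {s : Finset ℕ} (hs : s.Nonempty) : descList s ≠ [] := by
  simpa [descList, ← List.length_eq_zero_iff] using hs.ne_empty

end ListsAndTuples

section ExteriorSemialgebra

variable {A}

theorem bElem_of_nonempty (ε : Bool) (s : {s : Finset ℕ // s.Nonempty}) :
    bElem A ε s = Finsupp.single (some (ε, s)) 1 :=
  dif_pos s.2

theorem bElem_empty (ε : Bool) : bElem A ε ∅ = one A := by
  simp [bElem, one]

theorem xg_eq_single (i : ℕ) :
    xg A i = Finsupp.single (some (true, ⟨{i}, Finset.singleton_nonempty i⟩)) 1 :=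
  bElem_of_nonempty true ⟨{i}, Finset.singleton_nonempty i⟩

theorem neg_single (b : XB) (a : A) :
    neg A (Finsupp.single b a) = Finsupp.single (negB b) a :=
  Finsupp.mapDomain_single

theorem negB_involutive : Function.Involutive negB := by
  rintro (_ | ⟨ε, s⟩) <;> simp [negB]

theorem neg_apply (u : Ext A) (b : XB) : neg A u b = u (negB b) := by
  conv_lhs => rw [← negB_involutive b]
  exact Finsupp.mapDomain_apply negB_involutive.injective u (negB b)

theorem mergeEven_of_forall_lt {s t : Finset ℕ} (h : ∀ a ∈ s, ∀ b ∈ t, b < a) :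
    mergeEven s t = true := by
  have hcard (a : ℕ) (ha : a ∈ s) : (t.filter (a < ·)).card = 0 := by
    simpa [Finset.card_eq_zero, Finset.filter_eq_empty_iff] using fun b hb => (h a ha b hb).le
  simp [mergeEven, Finset.sum_congr rfl hcard]

/-- The wedge product of the exterior semialgebra as a bilinear map. -/
noncomputable def wedgeHom : Ext A →ₗ[A] Ext A →ₗ[A] Ext A :=
  Finsupp.linearCombination A fun b => Finsupp.linearCombination A (wB A b)

theorem wedge_eq_wedgeHom (u v : Ext A) : wedge A u v = wedgeHom u v := by
  simp [wedge, wedgeHom, Finsupp.linearCombination_apply, Finsupp.sum, LinearMap.sum_apply,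
    Finset.smul_sum, smul_smul]

@[simp]
theorem wedgeHom_single (b c : XB) :
    wedgeHom (Finsupp.single b (1 : A)) (Finsupp.single c 1) = wB A b c := by
  simp [wedgeHom]

theorem wedgeHom_apply_none (u v : Ext A) : wedgeHom u v none = u none * v none := by
  suffices wedgeHom.compr₂ (Finsupp.lapply none) =
      (LinearMap.mul A A).compl₁₂ (Finsupp.lapply none) (Finsupp.lapply (none : XB)) from
    LinearMap.congr_fun (LinearMap.congr_fun this u) v
  ext (_ | ⟨ε, s⟩) (_ | ⟨δ, t⟩)
  · simp [wB]
  · simp [wB]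
  · simp [wB]
  · by_cases h : s.1 ∩ t.1 = ∅ <;> simp [wB, bElem, h, s.2]

theorem wedgeL_eq_zero {l : List (Ext A)} (h : 0 ∈ l) : wedgeL A l = 0 := by
  induction l with
  | nil => simp at h
  | cons u l ih =>
    change wedge A u (wedgeL A l) = 0
    rw [wedge_eq_wedgeHom]
    rcases List.mem_cons.1 h with rfl | h
    · rw [map_zero, LinearMap.zero_apply]
    · rw [ih h, map_zero]

/-- Elements with no unit component that are fixed by the negation map.  They are quasi-zeros, and
unlike being a quasi-zero this condition descends along injective changes of scalars. -/
def IsBalanced (w : Ext A) : Prop :=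
  w none = 0 ∧ neg A w = w

theorem IsBalanced.isQuasiZero {w : Ext A} (h : IsBalanced w) : IsQuasiZero A w := by
  classical
  refine ⟨w.filter fun b => ∃ s, b = some (true, s), ?_⟩
  have hsymm (b : XB) : w (negB b) = w b := by rw [← neg_apply, h.2]
  ext b
  rw [Finsupp.add_apply, neg_apply]
  rcases b with _ | ⟨_ | _, s⟩
  · simp [negB, h.1]
  · simpa [negB] using (hsymm (some (false, s))).symm
  · simp [negB]

end ExteriorSemialgebra

section MultiplicativeFamilies

open Finset.HasAntidiagonal (antidiagonal)
open scoped PowerSeries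

variable {A}

/-- The coefficient of `zⁿ` in `D(z)(x^{i₁} ∧ ⋯ ∧ x^{iᵣ})`, where `D(z)` is the multiplicative
family with `D(z) x^i = Σ (g n i) zⁿ` and `l = [i₁, …, iᵣ]`. -/
noncomputable def hsExtL (g : ℕ → ℕ → Ext A) (n : ℕ) (l : List ℕ) : Ext A :=
  ∑ c ∈ Finset.Nat.antidiagonalTuple l.length n,
    wedgeL A (List.ofFn fun i : Fin l.length => g (c i) (l.get i))

theorem hsExtL_nil (g : ℕ → ℕ → Ext A) (n : ℕ) :
    hsExtL g n [] = if n = 0 then one A else 0 := by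
  cases n <;> simp [hsExtL, wedgeL]

theorem hsExtL_cons (g : ℕ → ℕ → Ext A) (n i : ℕ) (l : List ℕ) :
    hsExtL g n (i :: l) = ∑ p ∈ antidiagonal n, wedgeHom (g p.1 i) (hsExtL g p.2 l) := by
  refine (sum_antidiagonalTuple_succ _ _ _).trans (Finset.sum_congr rfl fun p _ => ?_)
  rw [hsExtL, map_sum]
  refine Finset.sum_congr rfl fun c _ => ?_
  simp [List.ofFn_succ, wedgeL, wedge_eq_wedgeHom]

/-- The multiplicative family `D(z)` of operators commuting with the negation map and determined
by `D(z) x^i = Σ (g n i) zⁿ`, as a power series of operators. -/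
noncomputable def hsExt (g : ℕ → ℕ → Ext A) : (Module.End A (Ext A))⟦X⟧ :=
  PowerSeries.mk fun n => Finsupp.linearCombination A (hsOn A (hsExtL g) n)

theorem coeff_hsExt (g : ℕ → ℕ → Ext A) (n : ℕ) (u : Ext A) :
    PowerSeries.coeff n (hsExt g) u = Finsupp.linearCombination A (hsOn A (hsExtL g) n) u := by
  rw [hsExt, PowerSeries.coeff_mk]

theorem hsExtL_zero_descList {g : ℕ → ℕ → Ext A} (hg : ∀ i, g 0 i = xg A i) (s : Finset ℕ) :
    hsExtL g 0 (descList s) = bElem A true s := by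
  induction s using Finset.induction_on_max with
  | empty => simp [hsExtL_nil, bElem_empty]
  | insert a s hlt ih =>
    rw [descList_insert hlt, hsExtL_cons, Finset.Nat.antidiagonal_zero, Finset.sum_singleton, ih,
      hg, xg_eq_single]
    rcases s.eq_empty_or_nonempty with rfl | hs
    · simp [bElem, wB]
    · have has : a ∉ s := fun ha => lt_irrefl _ (hlt a ha)
      have hmerge : mergeEven {a} s = true := mergeEven_of_forall_lt (by simpa using hlt)
      simp [bElem, hs, wB, has, hmerge]

theorem coeff_zero_hsExt {g : ℕ → ℕ → Ext A} (hg : ∀ i, g 0 i = xg A i) (u : Ext A) :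
    PowerSeries.coeff 0 (hsExt g) u = u := by
  have hbasis : hsOn A (hsExtL g) 0 = fun b => Finsupp.single b 1 := by
    funext b
    rcases b with _ | ⟨_ | _, s⟩
    · rfl
    · simp [hsOn, twist, hsExtL_zero_descList hg, bElem_of_nonempty, neg_single, negB]
    · simp [hsOn, twist, hsExtL_zero_descList hg, bElem_of_nonempty]
  rw [coeff_hsExt, hbasis]
  simp [Finsupp.linearCombination_apply]

/-- The inclusion of `V = ⊕ A x^i` into the exterior semialgebra as a linear map. -/
noncomputable def vInHom : (ℕ →₀ A) →ₗ[A] Ext A :=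
  Finsupp.linearCombination A (xg A)

@[simp]
theorem vInHom_single (i : ℕ) : vInHom (Finsupp.single i 1) = xg A i := by
  simp [vInHom]

/-- The coefficients `fⁿ(x^i)` of `D_f(z) x^i`. -/
noncomputable def geomGen (f : Module.End A (ℕ →₀ A)) (n i : ℕ) : Ext A :=
  vInHom ((f ^ n) (Finsupp.single i 1))

/-- The coefficients of `D̄_f(z) x^i = x^i + ((−)f(x^i)) z`. -/
noncomputable def oneSubGen (f : Module.End A (ℕ →₀ A)) (n i : ℕ) : Ext A :=
  match n with
  | 0 => xg A i
  | 1 => neg A (vInHom (f (Finsupp.single i 1)))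
  | _ + 2 => 0

theorem geomGen_zero (f : Module.End A (ℕ →₀ A)) (i : ℕ) : geomGen f 0 i = xg A i := by
  simp [geomGen]

theorem Df_eq_coeff_hsExt (f : Module.End A (ℕ →₀ A)) (n : ℕ) (u : Ext A) :
    Df A f n u = PowerSeries.coeff n (hsExt (geomGen f)) u :=
  (coeff_hsExt (geomGen f) n u).symm

theorem DbarL_eq_hsExtL (f : Module.End A (ℕ →₀ A)) : DbarL A f = hsExtL (oneSubGen f) := by
  funext n l
  refine Finset.sum_congr rfl fun c _ => ?_
  split_ifs with hc
  · congr 2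
    funext i
    rcases Nat.le_one_iff_eq_zero_or_eq_one.1 (hc i) with hi | hi <;>
      simp [hi, oneSubGen, vInHom, vIn, Finsupp.linearCombination_apply]
  · obtain ⟨i, hi⟩ := not_forall.1 hc
    obtain ⟨m, hm⟩ : ∃ m, c i = m + 2 := Nat.exists_eq_add_of_le' (not_le.1 hi)
    exact (wedgeL_eq_zero (List.mem_ofFn.2 ⟨i, by rw [hm, oneSubGen]⟩)).symm

theorem Dbar_eq_coeff_hsExt (f : Module.End A (ℕ →₀ A)) (n : ℕ) (u : Ext A) :
    Dbar A f n u = PowerSeries.coeff n (hsExt (oneSubGen f)) u := by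
  rw [coeff_hsExt, ← DbarL_eq_hsExtL]
  rfl

end MultiplicativeFamilies

section BaseChange

open scoped PowerSeries

variable {A} {B : Type*} [CommSemiring B] {X Y : Type*}

/-- Change of scalars along `φ` on free modules. -/
noncomputable def baseChange (φ : A →+* B) : (X →₀ A) →ₛₗ[φ] (X →₀ B) :=
  Finsupp.mapRange.linearMap φ.toSemilinearMap

@[simp]
theorem baseChange_apply (φ : A →+* B) (u : X →₀ A) (x : X) : baseChange φ u x = φ (u x) :=
  rfl

@[simp]
theorem baseChange_single (φ : A →+* B) (x : X) (a : A) :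
    baseChange φ (Finsupp.single x a) = Finsupp.single x (φ a) :=
  Finsupp.mapRange_single (hf := map_zero φ)

theorem baseChange_surjective {φ : A →+* B} (hφ : Function.Surjective φ) :
    Function.Surjective (baseChange φ : (X →₀ A) → (X →₀ B)) :=
  Finsupp.mapRange_surjective φ (map_zero φ) hφ

theorem baseChange_linearCombination (φ : A →+* B) {g : X → Y →₀ A} {g' : X → Y →₀ B}
    (h : ∀ x, baseChange φ (g x) = g' x) (u : X →₀ A) :
    baseChange φ (Finsupp.linearCombination A g u) =
      Finsupp.linearCombination B g' (baseChange φ u) := by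
  induction u using Finsupp.induction_linear with
  | zero => simp
  | add u v hu hv => simp [hu, hv]
  | single x a => simp [LinearMap.map_smulₛₗ, h]

theorem baseChange_one (φ : A →+* B) : baseChange φ (one A) = one B := by
  simp [one]

theorem baseChange_bElem (φ : A →+* B) (ε : Bool) (t : Finset ℕ) :
    baseChange φ (bElem A ε t) = bElem B ε t := by
  unfold bElem
  split_ifs <;> simp

theorem baseChange_wB (φ : A →+* B) (b c : XB) : baseChange φ (wB A b c) = wB B b c := by
  rcases b with _ | ⟨ε, s⟩ <;> rcases c with _ | ⟨δ, t⟩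
  · simp [wB]
  · simp [wB]
  · simp [wB]
  · simp only [wB, apply_ite (baseChange φ), baseChange_bElem, map_zero]

theorem baseChange_wedgeHom (φ : A →+* B) (u v : Ext A) :
    baseChange φ (wedgeHom u v) = wedgeHom (baseChange φ u) (baseChange φ v) := by
  induction u using Finsupp.induction_linear with
  | zero => simp
  | add u u' hu hu' => simp [hu, hu']
  | single b a =>
    simp only [wedgeHom, Finsupp.linearCombination_single, LinearMap.smul_apply,
      LinearMap.map_smulₛₗ, baseChange_single]
    rw [baseChange_linearCombination φ (baseChange_wB φ b)]

theorem baseChange_neg (φ : A →+* B) (u : Ext A) :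
    baseChange φ (neg A u) = neg B (baseChange φ u) := by
  ext b
  simp [neg_apply]

theorem baseChange_hsExtL (φ : A →+* B) {g : ℕ → ℕ → Ext A} {g' : ℕ → ℕ → Ext B}
    (h : ∀ n i, baseChange φ (g n i) = g' n i) (n : ℕ) (l : List ℕ) :
    baseChange φ (hsExtL g n l) = hsExtL g' n l := by
  induction l generalizing n with
  | nil => simp only [hsExtL_nil, apply_ite (baseChange φ), baseChange_one, map_zero]
  | cons i l ih => simp only [hsExtL_cons, map_sum, baseChange_wedgeHom, h, ih]

theorem intertwines_baseChange_hsExt (φ : A →+* B) {g : ℕ → ℕ → Ext A} {g' : ℕ → ℕ → Ext B}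
    (h : ∀ n i, baseChange φ (g n i) = g' n i) :
    Intertwines (baseChange φ) (hsExt g) (hsExt g') := by
  intro n u
  rw [coeff_hsExt, coeff_hsExt]
  refine baseChange_linearCombination φ (fun b => ?_) u
  rcases b with _ | ⟨ε, s⟩
  · simp only [hsOn, apply_ite (baseChange φ), baseChange_one, map_zero]
  · simp only [hsOn, twist, apply_ite (baseChange φ), baseChange_neg, baseChange_hsExtL φ h]

theorem baseChange_vInHom (φ : A →+* B) (v : ℕ →₀ A) :
    baseChange φ (vInHom v) = vInHom (baseChange φ v) :=
  baseChange_linearCombination φ (fun i => baseChange_bElem φ true {i}) v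

theorem baseChange_geomGen {φ : A →+* B} {f : Module.End A (ℕ →₀ A)}
    {f' : Module.End B (ℕ →₀ B)} (h : ∀ v, baseChange φ (f v) = f' (baseChange φ v)) (n i : ℕ) :
    baseChange φ (geomGen f n i) = geomGen f' n i := by
  have hpow (v : ℕ →₀ A) : baseChange φ ((f ^ n) v) = (f' ^ n) (baseChange φ v) := by
    rw [Module.End.pow_apply, Module.End.pow_apply]
    exact Function.Semiconj.iterate_right h n v
  simp [geomGen, baseChange_vInHom, hpow]

theorem baseChange_oneSubGen {φ : A →+* B} {f : Module.End A (ℕ →₀ A)}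
    {f' : Module.End B (ℕ →₀ B)} (h : ∀ v, baseChange φ (f v) = f' (baseChange φ v)) (n i : ℕ) :
    baseChange φ (oneSubGen f n i) = oneSubGen f' n i := by
  match n with
  | 0 => exact baseChange_bElem φ true {i}
  | 1 => simp [oneSubGen, baseChange_neg, baseChange_vInHom, h]
  | n + 2 => simp [oneSubGen]

theorem IsBalanced.map {w : Ext A} (h : IsBalanced w) (φ : A →+* B) :
    IsBalanced (baseChange φ w) :=
  ⟨by simp [h.1], by rw [← baseChange_neg, h.2]⟩

theorem IsBalanced.of_map {φ : A →+* B} (hφ : Function.Injective φ) {w : Ext A}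
    (h : IsBalanced (baseChange φ w)) : IsBalanced w := by
  refine ⟨hφ (by simpa using h.1), Finsupp.mapRange_injective φ (map_zero φ) hφ ?_⟩
  exact (baseChange_neg φ w).trans h.2

theorem exists_end_baseChange (φ : A →+* B) (f : Module.End A (X →₀ A)) :
    ∃ f' : Module.End B (X →₀ B), ∀ v, baseChange φ (f v) = f' (baseChange φ v) := by
  refine ⟨Finsupp.linearCombination B fun x => baseChange φ (f (Finsupp.single x 1)), fun v => ?_⟩
  rw [← baseChange_linearCombination φ (fun _ => rfl)]
  congr 1
  exact LinearMap.congr_fun (g := Finsupp.linearCombination A _) (by ext; simp) v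

theorem exists_end_lift {φ : A →+* B} (hφ : Function.Surjective φ) (f : Module.End B (X →₀ B)) :
    ∃ f' : Module.End A (X →₀ A), ∀ v, baseChange φ (f' v) = f (baseChange φ v) := by
  choose c hc using fun x => baseChange_surjective hφ (f (Finsupp.single x 1))
  refine ⟨Finsupp.linearCombination A c, fun v => ?_⟩
  rw [baseChange_linearCombination φ hc]
  exact LinearMap.congr_fun (f := Finsupp.linearCombination B _) (by ext; simp) (baseChange φ v)

end BaseChange

section RingCase

open ExteriorAlgebra (ι)
open Finset.HasAntidiagonal (antidiagonal)
open scoped PowerSeries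

variable {R : Type*} [CommRing R]

variable (R) in
/-- The value `±1` in `R` of a Boolean sign. -/
def sign (ε : Bool) : R := if ε then 1 else -1

theorem sign_beq (ε δ : Bool) : sign R (ε == δ) = sign R ε * sign R δ := by
  cases ε <;> cases δ <;> simp [sign]

theorem sign_mergeEven (s t : Finset ℕ) :
    sign R (mergeEven s t) = (-1) ^ ∑ a ∈ s, (t.filter (a < ·)).card := by
  rcases Nat.even_or_odd (∑ a ∈ s, (t.filter (a < ·)).card) with h | h
  · simp [mergeEven, sign, h.neg_one_pow, Nat.even_iff.1 h]
  · simp [mergeEven, sign, h.neg_one_pow, Nat.odd_iff.1 h]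

variable (R) in
/-- The product `x^{i₁} ⋯ x^{iᵣ}` in the exterior algebra over the elements `i₁ > ⋯ > iᵣ` of a
finite set. -/
noncomputable def monomial (s : Finset ℕ) : ExteriorAlgebra R (ℕ →₀ R) :=
  ((descList s).map fun i => ι R (Finsupp.single i 1)).prod

@[simp]
theorem monomial_empty : monomial R ∅ = 1 := by
  simp [monomial]

theorem monomial_insert {a : ℕ} {t : Finset ℕ} (h : ∀ b ∈ t, b < a) :
    monomial R (insert a t) = ι R (Finsupp.single a 1) * monomial R t := by
  simp [monomial, descList_insert h]

theorem monomial_singleton (i : ℕ) : monomial R {i} = ι R (Finsupp.single i 1) := by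
  simpa using monomial_insert (R := R) (a := i) (t := ∅) (by simp)

theorem ι_mul_monomial (i : ℕ) (t : Finset ℕ) :
    ι R (Finsupp.single i 1) * monomial R t =
      if i ∈ t then 0 else (-1 : R) ^ (t.filter (i < ·)).card • monomial R (insert i t) := by
  induction t using Finset.induction_on_max with
  | empty => simp [monomial_singleton]
  | insert a t hlt ih =>
    have hat : a ∉ t := fun ha => lt_irrefl _ (hlt a ha)
    rcases lt_trichotomy i a with hia | rfl | hai
    · have hswap : ι R (Finsupp.single i (1 : R)) * ι R (Finsupp.single a 1) =
          -(ι R (Finsupp.single a 1) * ι R (Finsupp.single i 1)) :=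
        eq_neg_of_add_eq_zero_left (ExteriorAlgebra.ι_add_mul_swap _ _)
      have hlt' : ∀ b ∈ insert i t, b < a := by simpa [hia] using hlt
      rw [monomial_insert hlt, ← mul_assoc, hswap, neg_mul, mul_assoc, ih]
      by_cases hit : i ∈ t
      · simp [hit]
      · rw [if_neg hit, if_neg (by simp [hit, hia.ne]), Finset.filter_insert, if_pos hia,
          Finset.card_insert_of_notMem (by simp [hat]), Finset.insert_comm, monomial_insert hlt']
        simp [pow_succ]
    · rw [monomial_insert hlt, ← mul_assoc]
      simp
    · have hlt' : ∀ b ∈ insert a t, b < i := by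
        simpa [hai] using fun b hb => (hlt b hb).trans hai
      have hnot : i ∉ insert a t := fun hi => lt_irrefl _ (hlt' i hi)
      have hfilter : (insert a t).filter (i < ·) = ∅ :=
        Finset.filter_eq_empty_iff.2 fun b hb => (hlt' b hb).le.not_gt
      rw [if_neg hnot, hfilter, monomial_insert hlt']
      simp

theorem monomial_mul_monomial (s t : Finset ℕ) :
    monomial R s * monomial R t =
      if s ∩ t = ∅ then sign R (mergeEven s t) • monomial R (s ∪ t) else 0 := by
  simp only [sign_mergeEven]
  induction s using Finset.induction_on_max with
  | empty => simp
  | insert a s hlt ih =>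
    have has : a ∉ s := fun ha => lt_irrefl _ (hlt a ha)
    have hfilter : (s ∪ t).filter (a < ·) = t.filter (a < ·) := by
      rw [Finset.filter_union,
        Finset.filter_eq_empty_iff.2 fun b hb => (hlt b hb).le.not_gt, Finset.empty_union]
    rw [monomial_insert hlt, mul_assoc, ih]
    by_cases hat : a ∈ t
    · by_cases hst : s ∩ t = ∅ <;> simp [hst, hat, ι_mul_monomial]
    · by_cases hst : s ∩ t = ∅
      · simp [hst, hat, has, ι_mul_monomial, hfilter, Finset.insert_inter_of_notMem,
          Finset.sum_insert, smul_smul, pow_add, mul_comm]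
      · simp [hst, hat, Finset.insert_inter_of_notMem]

theorem monomial_eq_sign_smul_basis (s : Finset ℕ) :
    monomial R s = Equiv.Perm.sign (Fin.revPerm (n := s.card)) •
      (Finsupp.basisSingleOne (R := R) (ι := ℕ)).ExteriorAlgebra s := by
  have hlist : descList s = List.ofFn fun i => s.orderEmbOfFin rfl (Fin.revPerm i) := by
    rw [descList, ← Finset.listMap_orderEmbOfFin_finRange s rfl, ← List.map_reverse,
      List.finRange_reverse, List.ofFn_eq_map, List.map_map]
    rfl
  have hperm := (ExteriorAlgebra.ιMulti R s.card).map_perm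
    (fun i => (Finsupp.single (s.orderEmbOfFin rfl i) 1 : ℕ →₀ R)) Fin.revPerm
  rw [ExteriorAlgebra.ιMulti_apply] at hperm
  rw [ExteriorAlgebra.basis_apply_ofCard (n := s.card) _ rfl, monomial, hlist, List.map_ofFn]
  exact hperm

theorem linearIndependent_monomial : LinearIndependent R (monomial R) := by
  rw [funext (monomial_eq_sign_smul_basis (R := R))]
  exact (Finsupp.basisSingleOne (R := R) (ι := ℕ)).ExteriorAlgebra.linearIndependent.group_smul
    fun s => Equiv.Perm.sign (Fin.revPerm (n := s.card))

/-- The coefficients of the image of an element of the exterior semialgebra in the exterior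
algebra: the two signed copies of a monomial become opposite, and the unit is indexed by `∅`. -/
noncomputable def signedCoeff : Ext R →ₗ[R] (Finset ℕ →₀ R) :=
  Finsupp.linearCombination R fun
    | none => Finsupp.single ∅ 1
    | some (ε, s) => Finsupp.single s.1 (sign R ε)

theorem signedCoeff_apply_empty (w : Ext R) : signedCoeff w ∅ = w none := by
  refine LinearMap.congr_fun (f := Finsupp.lapply ∅ ∘ₗ signedCoeff) (g := Finsupp.lapply none) ?_ w
  ext (_ | ⟨ε, s⟩)
  · simp [signedCoeff]
  · simp [signedCoeff, s.2.ne_empty]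

theorem signedCoeff_apply (w : Ext R) (s : {s : Finset ℕ // s.Nonempty}) :
    signedCoeff w s.1 = w (some (true, s)) - w (some (false, s)) := by
  refine LinearMap.congr_fun (f := Finsupp.lapply s.1 ∘ₗ signedCoeff)
    (g := Finsupp.lapply (some (true, s)) - Finsupp.lapply (some (false, s))) ?_ w
  ext (_ | ⟨ε, t⟩)
  · simp [signedCoeff, s.2.ne_empty.symm]
  · rcases eq_or_ne t s with rfl | hts
    · cases ε <;> simp [signedCoeff, sign]
    · simp [signedCoeff, hts, Subtype.coe_inj]

theorem signedCoeff_neg {u : Ext R} (hu : u none = 0) : signedCoeff (neg R u) = -signedCoeff u := by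
  ext s
  rcases s.eq_empty_or_nonempty with rfl | hs
  · simp [signedCoeff_apply_empty, neg_apply, negB, hu]
  · have hcoeff (w : Ext R) := signedCoeff_apply w ⟨s, hs⟩
    simp [hcoeff, neg_apply, negB]

/-- The canonical map to the exterior algebra, identifying the negation map with `x ↦ -x`
away from the unit. -/
noncomputable def toExterior : Ext R →ₗ[R] ExteriorAlgebra R (ℕ →₀ R) :=
  Finsupp.linearCombination R (monomial R) ∘ₗ signedCoeff

@[simp]
theorem toExterior_single_none : toExterior (Finsupp.single none (1 : R)) = 1 := by
  simp [toExterior, signedCoeff]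

@[simp]
theorem toExterior_single_some (ε : Bool) (s : {s : Finset ℕ // s.Nonempty}) :
    toExterior (Finsupp.single (some (ε, s)) (1 : R)) = sign R ε • monomial R s := by
  simp [toExterior, signedCoeff]

theorem toExterior_xg (i : ℕ) : toExterior (xg R i) = ι R (Finsupp.single i 1) := by
  simp [xg_eq_single, sign, monomial_singleton]

theorem toExterior_neg {u : Ext R} (hu : u none = 0) : toExterior (neg R u) = -toExterior u := by
  simp [toExterior, signedCoeff_neg hu]

theorem toExterior_twist (ε : Bool) {u : Ext R} (hu : u none = 0) :
    toExterior (twist R ε u) = sign R ε • toExterior u := by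
  cases ε <;> simp [twist, sign, toExterior_neg hu]

theorem toExterior_wB (b c : XB) :
    toExterior (wB R b c) =
      toExterior (Finsupp.single b 1) * toExterior (Finsupp.single c 1) := by
  rcases b with _ | ⟨ε, s⟩ <;> rcases c with _ | ⟨δ, t⟩
  · simp [wB]
  · simp [wB]
  · simp [wB]
  · have hne : (s.1 ∪ t.1).Nonempty := s.2.mono Finset.subset_union_left
    rw [toExterior_single_some, toExterior_single_some, smul_mul_smul_comm, monomial_mul_monomial]
    by_cases hst : s.1 ∩ t.1 = ∅
    · simp [wB, hst, bElem, hne, sign_beq, smul_smul]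
    · simp [wB, hst]

theorem toExterior_wedgeHom (u v : Ext R) :
    toExterior (wedgeHom u v) = toExterior u * toExterior v := by
  suffices wedgeHom.compr₂ toExterior =
      (LinearMap.mul R _).compl₁₂ (toExterior (R := R)) toExterior from
    LinearMap.congr_fun (LinearMap.congr_fun this u) v
  ext b c
  simp [toExterior_wB]

theorem isBalanced_of_toExterior_eq_zero {w : Ext R} (h : toExterior w = 0) : IsBalanced w := by
  have hcoeff : signedCoeff w = 0 := linearIndependent_iff.1 linearIndependent_monomial _ h
  have hsymm (s : {s : Finset ℕ // s.Nonempty}) : w (some (true, s)) = w (some (false, s)) :=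
    sub_eq_zero.1 (by rw [← signedCoeff_apply, hcoeff, Finsupp.zero_apply])
  refine ⟨by rw [← signedCoeff_apply_empty, hcoeff, Finsupp.zero_apply], ?_⟩
  ext b
  rcases b with _ | ⟨_ | _, s⟩ <;> simp [neg_apply, negB, hsymm]

theorem toExterior_vInHom (v : ℕ →₀ R) : toExterior (vInHom v) = ι R v := by
  refine LinearMap.congr_fun (f := toExterior ∘ₗ vInHom) ?_ v
  ext i
  simp [toExterior_xg]

theorem vInHom_apply_none {A : Type*} [CommSemiring A] (v : ℕ →₀ A) : vInHom v none = 0 := by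
  refine LinearMap.congr_fun (f := Finsupp.lapply none ∘ₗ vInHom) (g := 0) ?_ v
  ext i
  simp [xg_eq_single]

/-- The coefficients `g n i` of `D(z) x^i` come from the series `h` of endomorphisms of `V`: their
images in the exterior algebra are the vectors `hₙ(x^i)`. -/
structure Represents (g : ℕ → ℕ → Ext R) (h : (Module.End R (ℕ →₀ R))⟦X⟧) : Prop where
  toExterior_eq : ∀ n i, toExterior (g n i) = ι R (PowerSeries.coeff n h (Finsupp.single i 1))
  apply_none : ∀ n i, g n i none = 0

theorem represents_geomGen (f : Module.End R (ℕ →₀ R)) :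
    Represents (geomGen f) (PowerSeries.mk (f ^ ·)) where
  toExterior_eq n i := by simp [geomGen, toExterior_vInHom]
  apply_none _ _ := vInHom_apply_none _

theorem represents_oneSubGen (f : Module.End R (ℕ →₀ R)) :
    Represents (oneSubGen f) (1 - PowerSeries.C f * PowerSeries.X) where
  toExterior_eq n i := by
    match n with
    | 0 => simp [oneSubGen, toExterior_xg]
    | 1 => simp [oneSubGen, toExterior_neg, vInHom_apply_none, toExterior_vInHom,
        PowerSeries.coeff_one]
    | n + 2 => simp [oneSubGen, PowerSeries.coeff_one]
  apply_none n i := by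
    match n with
    | 0 => simp [oneSubGen, xg_eq_single]
    | 1 => simpa [oneSubGen, neg_apply, negB] using vInHom_apply_none _
    | _ + 2 => simp [oneSubGen]

namespace Represents

variable {g g' : ℕ → ℕ → Ext R} {h h' : (Module.End R (ℕ →₀ R))⟦X⟧}

theorem toExterior_hsExtL (hg : Represents g h) (n : ℕ) (l : List ℕ) :
    toExterior (hsExtL g n l) = PowerSeries.coeff n (hasseSchmidt h)
      (l.map fun i => ι R (Finsupp.single i 1)).prod := by
  induction l generalizing n with
  | nil =>
    rw [hsExtL_nil, List.map_nil, List.prod_nil, coeff_hasseSchmidt_one]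
    split_ifs <;> simp [one]
  | cons i l ih =>
    rw [hsExtL_cons, List.map_cons, List.prod_cons, coeff_hasseSchmidt_ι_mul, map_sum]
    simp only [toExterior_wedgeHom, hg.toExterior_eq, ih]

theorem hsExtL_apply_none (hg : Represents g h) (n : ℕ) {l : List ℕ} (hl : l ≠ []) :
    hsExtL g n l none = 0 := by
  obtain ⟨i, l, rfl⟩ := List.exists_cons_of_ne_nil hl
  simp [hsExtL_cons, Finsupp.finsetSum_apply, wedgeHom_apply_none, hg.apply_none]

theorem intertwines (hg : Represents g h) :
    Intertwines toExterior (hsExt g) (hasseSchmidt h) := by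
  intro n u
  refine LinearMap.congr_fun (f := toExterior ∘ₗ PowerSeries.coeff n (hsExt g))
    (g := PowerSeries.coeff n (hasseSchmidt h) ∘ₗ toExterior) ?_ u
  ext (_ | ⟨ε, s⟩)
  · suffices toExterior (if n = 0 then one R else 0) = if n = 0 then 1 else 0 by
      simpa [coeff_hsExt, hsOn, coeff_hasseSchmidt_one]
    split_ifs <;> simp [one]
  · simp [coeff_hsExt, hsOn, hg.toExterior_hsExtL, monomial,
      toExterior_twist ε (hg.hsExtL_apply_none n (descList_ne_nil s.2))]

theorem isBalanced_coeff_mul (hg : Represents g h) (hg' : Represents g' h') (hmul : h * h' = 1)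
    {k : ℕ} (hk : k ≠ 0) (u : Ext R) :
    IsBalanced (PowerSeries.coeff k (hsExt g * hsExt g') u) := by
  refine isBalanced_of_toExterior_eq_zero ?_
  rw [hg.intertwines.mul hg'.intertwines, ← hasseSchmidt_mul, hmul, hasseSchmidt_one,
    PowerSeries.coeff_one, if_neg hk, LinearMap.zero_apply]

end Represents

end RingCase

section Transfer

variable {A} {B : Type*} [CommSemiring B]

/-- The two composites of `D̄_f(z)` and `D_f(z)` are balanced in every positive degree. -/
def BalancedInverse (f : Module.End A (ℕ →₀ A)) : Prop :=
  ∀ k ≠ 0, ∀ u,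
    IsBalanced (PowerSeries.coeff k (hsExt (oneSubGen f) * hsExt (geomGen f)) u) ∧
    IsBalanced (PowerSeries.coeff k (hsExt (geomGen f) * hsExt (oneSubGen f)) u)

theorem balancedInverse_of_commRing {R : Type*} [CommRing R] (f : Module.End R (ℕ →₀ R)) :
    BalancedInverse f := fun _ hk u =>
  ⟨(represents_oneSubGen f).isBalanced_coeff_mul (represents_geomGen f)
      (one_sub_C_mul_X_mul_mk_pow f) hk u,
    (represents_geomGen f).isBalanced_coeff_mul (represents_oneSubGen f)
      (mk_pow_mul_one_sub_C_mul_X f) hk u⟩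

theorem intertwines_baseChange_mul {φ : A →+* B} {f : Module.End A (ℕ →₀ A)}
    {f' : Module.End B (ℕ →₀ B)} (h : ∀ v, baseChange φ (f v) = f' (baseChange φ v)) :
    Intertwines (baseChange φ) (hsExt (oneSubGen f) * hsExt (geomGen f))
        (hsExt (oneSubGen f') * hsExt (geomGen f')) ∧
      Intertwines (baseChange φ) (hsExt (geomGen f) * hsExt (oneSubGen f))
        (hsExt (geomGen f') * hsExt (oneSubGen f')) := by
  have hgeom := intertwines_baseChange_hsExt φ (baseChange_geomGen h)
  have honeSub := intertwines_baseChange_hsExt φ (baseChange_oneSubGen h)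
  exact ⟨honeSub.mul hgeom, hgeom.mul honeSub⟩

theorem BalancedInverse.of_injective {φ : A →+* B} (hφ : Function.Injective φ)
    (hB : ∀ f : Module.End B (ℕ →₀ B), BalancedInverse f) (f : Module.End A (ℕ →₀ A)) :
    BalancedInverse f := by
  obtain ⟨f', hf'⟩ := exists_end_baseChange φ f
  obtain ⟨hleft, hright⟩ := intertwines_baseChange_mul hf'
  intro k hk u
  obtain ⟨hbl, hbr⟩ := hB f' k hk (baseChange φ u)
  exact ⟨.of_map hφ ((hleft k u).symm ▸ hbl), .of_map hφ ((hright k u).symm ▸ hbr)⟩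

theorem BalancedInverse.of_surjective {φ : A →+* B} (hφ : Function.Surjective φ)
    (hA : ∀ f : Module.End A (ℕ →₀ A), BalancedInverse f) (f : Module.End B (ℕ →₀ B)) :
    BalancedInverse f := by
  obtain ⟨f', hf'⟩ := exists_end_lift hφ f
  obtain ⟨hleft, hright⟩ := intertwines_baseChange_mul hf'
  intro k hk u
  obtain ⟨u', rfl⟩ := baseChange_surjective hφ u
  obtain ⟨hbl, hbr⟩ := hA f' k hk u'
  exact ⟨hleft k u' ▸ hbl.map φ, hright k u' ▸ hbr.map φ⟩

theorem balancedInverse (f : Module.End A (ℕ →₀ A)) : BalancedInverse f := by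
  -- Every semiring is a quotient of a polynomial semiring over `ℕ`, which embeds in one over `ℤ`.
  have hsurj : Function.Surjective (MvPolynomial.eval₂Hom (Nat.castRingHom A) id) := fun a =>
    ⟨MvPolynomial.X a, MvPolynomial.eval₂Hom_X' _ _ _⟩
  have hinj : Function.Injective (MvPolynomial.map (σ := A) (Nat.castRingHom ℤ)) :=
    MvPolynomial.map_injective _ Nat.cast_injective
  exact .of_surjective hsurj (.of_injective hinj balancedInverse_of_commRing) f

theorem sum_range_eq_coeff_mul {P Q : PowerSeries (Module.End A (Ext A))} (k : ℕ) (u : Ext A) :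
    ∑ j ∈ Finset.range (k + 1), PowerSeries.coeff j P (PowerSeries.coeff (k - j) Q u) =
      PowerSeries.coeff k (P * Q) u := by
  rw [PowerSeries.coeff_mul, Finset.Nat.sum_antidiagonal_eq_sum_range_succ_mk,
    LinearMap.sum_apply]
  rfl

end Transfer

/-- `D_f(z)` and `D̄_f(z)` are quasi-inverse: for every
`u ∈ ⋀`, both `D̄_f(z)(D_f(z)u)` and `D_f(z)(D̄_f(z)u)` have constant coefficient
equal to `u`, and for every `k ≥ 1` their coefficient of `z^k` (the convolution
`Σ_{j=0}^{k}` of the coefficient operators) is a quasi-zero; i.e.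
`D̄_f(z)(D_f(z)u) ⪰ u` and `D_f(z)(D̄_f(z)u) ⪰ u`. -/
theorem Df_Dbar_quasi_inverse (f : Module.End A (ℕ →₀ A)) (u : Ext A) :
    (Dbar A f 0 (Df A f 0 u) = u) ∧
    (Df A f 0 (Dbar A f 0 u) = u) ∧
    (∀ k : ℕ, 1 ≤ k →
      IsQuasiZero A (∑ j ∈ Finset.range (k + 1), Dbar A f j (Df A f (k - j) u))) ∧
    (∀ k : ℕ, 1 ≤ k →
      IsQuasiZero A (∑ j ∈ Finset.range (k + 1), Df A f j (Dbar A f (k - j) u))) := by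
  have hDbar_zero := coeff_zero_hsExt (g := oneSubGen f) fun _ => rfl
  have hDf_zero := coeff_zero_hsExt (geomGen_zero f)
  simp only [Df_eq_coeff_hsExt, Dbar_eq_coeff_hsExt, sum_range_eq_coeff_mul]
  exact ⟨by rw [hDf_zero, hDbar_zero], by rw [hDf_zero, hDbar_zero],
    fun k hk => (balancedInverse f k (Nat.one_le_iff_ne_zero.1 hk) u).1.isQuasiZero,
    fun k hk => (balancedInverse f k (Nat.one_le_iff_ne_zero.1 hk) u).2.isQuasiZero⟩

end ExtSemi
end
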